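/- arXiv:1409.5878 — 2 statements merged into one kernel-verified Lean document; each statement's English description precedes it below -/
import Mathlib

section
/- Let k be a field of characteristic zero, M = ℤ^n, p : M → ℤ a nonzero primitive linear form, e ∈ M, and ∂_{p,e} the derivation of k[M] given by χ^m ↦ p(m)χ^{m+e}. Then the induced derivation on the fraction field Frac(k[M]) is rationally integrable if and only if p(e) = 1 or p(e) = -1. -/
/-!
For a monomial `x = χ^m` put `w = χ^(-e)`. Then `D w = -p(e)` and `w * D x = p(m) * x`, so that
`exp(tD) w = w - p(e) t`, and the series `F = exp(tD) x` solves `(w - p(e) t) F' = p(m) F`.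
If `F = P / Q` is rational, comparing leading coefficients in
`(w - p(e) t) (P' Q - P Q') = p(m) P Q` gives `p(m) = (deg Q - deg P) p(e)`. Conversely, the `f`
with `exp(tD) f` rational form a field which contains `ker D` and `w`; if `p(m) = r p(e)`, then
`χ^m w^r` lies in `ker D`, so `χ^m` is in that field. Hence `D` is rationally integrable if and
only if `p(e)` divides all values of `p`, which for primitive `p` means `p(e) = ±1`.
-/

namespace RationalIntegrability

open Polynomial PowerSeries LaurentSeries
open scoped RatFunc

section FormalExponential

variable {k A : Type*} [CommSemiring k] [CommRing A] [Algebra k A] [Algebra ℚ A]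
  (D : Derivation k A A)

/-- The formal exponential `exp(tD)` of a derivation as a `k`-linear map; it is multiplicative,
see `formalExp`. The coefficients are written with rational scalars so that `A` need not be a
field. -/
noncomputable def formalExpLinearMap : A →ₗ[k] A⟦X⟧ where
  toFun a := PowerSeries.mk fun j => (j.factorial : ℚ)⁻¹ • D^[j] a
  map_add' a b := by ext j; simp [iterate_map_add]
  map_smul' c a := by
    ext j
    have iterate_smul : D^[j] (c • a) = c • D^[j] a :=
      (Function.Commute.iterate_left (f := D) (g := (c • ·)) (fun b => D.map_smul c b) j) a
    simp [iterate_smul, smul_comm c]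

lemma coeff_formalExpLinearMap (a : A) (j : ℕ) :
    coeff j (formalExpLinearMap D a) = (j.factorial : ℚ)⁻¹ • D^[j] a := by
  simp [formalExpLinearMap]

lemma derivative_formalExpLinearMap (a : A) :
    d⁄dX A (formalExpLinearMap D a) = formalExpLinearMap D (D a) := by
  ext j
  have scalar : ((j + 1 : ℕ) : ℚ) * ((j + 1).factorial : ℚ)⁻¹ = (j.factorial : ℚ)⁻¹ := by
    rw [Nat.factorial_succ]
    push_cast
    field_simp
  rw [PowerSeries.coeff_derivative, coeff_formalExpLinearMap, coeff_formalExpLinearMap, ← scalar,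
    mul_smul, Nat.cast_smul_eq_nsmul, nsmul_eq_mul, Function.iterate_succ_apply, mul_comm,
    Nat.cast_succ]

lemma formalExpLinearMap_mul (a b : A) :
    formalExpLinearMap D (a * b) = formalExpLinearMap D a * formalExpLinearMap D b := by
  ext j
  induction j generalizing a b with
  | zero => simp [PowerSeries.coeff_mul, coeff_formalExpLinearMap]
  | succ j ih =>
    have isUnit_succ : IsUnit ((j : A) + 1) := by
      simpa using (IsUnit.mk0 ((j : ℚ) + 1) (by positivity)).map (algebraMap ℚ A)
    apply isUnit_succ.mul_right_cancel
    rw [← PowerSeries.coeff_derivative, ← PowerSeries.coeff_derivative,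
      derivative_formalExpLinearMap, D.leibniz, Derivation.leibniz,
      derivative_formalExpLinearMap, derivative_formalExpLinearMap]
    simp only [smul_eq_mul, map_add, ih]

/-- The formal exponential `exp(tD) : a ↦ ∑ Dʲ(a) / j! tʲ` of a derivation `D`. -/
noncomputable def formalExp : A →ₐ[k] A⟦X⟧ :=
  AlgHom.ofLinearMap (formalExpLinearMap D)
    (by ext (_ | j) <;> simp [coeff_formalExpLinearMap, PowerSeries.coeff_one, iterate_map_zero])
    (formalExpLinearMap_mul D)

lemma coeff_formalExp (a : A) (j : ℕ) :
    coeff j (formalExp D a) = (j.factorial : ℚ)⁻¹ • D^[j] a :=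
  coeff_formalExpLinearMap D a j

lemma derivative_formalExp (a : A) : d⁄dX A (formalExp D a) = formalExp D (D a) :=
  derivative_formalExpLinearMap D a

lemma formalExp_injective : Function.Injective (formalExp D) := fun a b h => by
  simpa [coeff_formalExp] using congrArg (PowerSeries.coeff 0) h

variable {D}

lemma formalExp_of_apply_apply_eq_zero {a : A} (ha : D (D a) = 0) :
    formalExp D a = (Polynomial.C a + Polynomial.C (D a) * Polynomial.X : A[X]) := by
  ext (_ | _ | j)
  · simp [coeff_formalExp]
  · simp [coeff_formalExp]
  · simp [coeff_formalExp, ha, iterate_map_zero]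

lemma formalExp_of_apply_eq_zero {a : A} (ha : D a = 0) :
    formalExp D a = (Polynomial.C a : A[X]) := by
  simpa [ha] using formalExp_of_apply_apply_eq_zero (D := D) (a := a) (by simp [ha])

lemma linear_mul_derivative_formalExp {w c a : A} (hw : D (D w) = 0) (hc : D c = 0)
    (ha : w * D a = c * a) :
    ((Polynomial.C w + Polynomial.C (D w) * Polynomial.X : A[X]) : A⟦X⟧) *
      d⁄dX A (formalExp D a) = (Polynomial.C c : A[X]) * formalExp D a := by
  rw [derivative_formalExp, ← formalExp_of_apply_apply_eq_zero hw,
    ← formalExp_of_apply_eq_zero hc, ← map_mul, ← map_mul, ha]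

end FormalExponential

section Wronskian

variable {R : Type*} [CommRing R]

lemma coeff_wronskian_natDegree_add (P Q : R[X]) :
    (wronskian P Q).coeff (P.natDegree + Q.natDegree) = 0 := by
  by_cases h : wronskian P Q = 0
  · simp [h]
  · exact coeff_eq_zero_of_natDegree_lt (natDegree_wronskian_lt_add h)

lemma coeff_X_mul_derivative (P : R[X]) (j : ℕ) :
    (Polynomial.X * derivative P).coeff j = j * P.coeff j := by
  cases j with
  | zero => simp
  | succ j => rw [coeff_X_mul, Polynomial.coeff_derivative, mul_comm, Nat.cast_succ]

lemma natDegree_X_mul_derivative_le (P : R[X]) :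
    (Polynomial.X * derivative P).natDegree ≤ P.natDegree :=
  natDegree_le_iff_coeff_eq_zero.2 fun j hj => by
    rw [coeff_X_mul_derivative, coeff_eq_zero_of_natDegree_lt hj, mul_zero]

lemma coeff_X_mul_wronskian_natDegree_add (P Q : R[X]) :
    (Polynomial.X * wronskian P Q).coeff (P.natDegree + Q.natDegree) =
      ((Q.natDegree : R) - P.natDegree) * (P.leadingCoeff * Q.leadingCoeff) := by
  have euler : Polynomial.X * wronskian P Q =
      P * (Polynomial.X * derivative Q) - Polynomial.X * derivative P * Q := by
    rw [wronskian]; ring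
  rw [euler, Polynomial.coeff_sub,
    coeff_mul_add_eq_of_natDegree_le le_rfl (natDegree_X_mul_derivative_le Q),
    coeff_mul_add_eq_of_natDegree_le (natDegree_X_mul_derivative_le P) le_rfl,
    coeff_X_mul_derivative, coeff_X_mul_derivative, leadingCoeff, leadingCoeff]
  ring

lemma mem_zmultiples_of_linear_mul_wronskian_eq [IsDomain R] {P Q : R[X]} (hP : P ≠ 0)
    (hQ : Q ≠ 0) {w a c : R}
    (h : (Polynomial.C w + Polynomial.C a * Polynomial.X) * wronskian P Q =
      Polynomial.C c * (P * Q)) :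
    c ∈ AddSubgroup.zmultiples a := by
  have top_coeff := congrArg (fun S : R[X] => S.coeff (P.natDegree + Q.natDegree)) h
  simp only [add_mul, mul_assoc, Polynomial.coeff_add, Polynomial.coeff_C_mul,
    coeff_wronskian_natDegree_add, coeff_X_mul_wronskian_natDegree_add,
    coeff_mul_degree_add_degree] at top_coeff
  refine AddSubgroup.mem_zmultiples_iff.2 ⟨Q.natDegree - P.natDegree, ?_⟩
  apply mul_right_cancel₀
    (mul_ne_zero (leadingCoeff_ne_zero.2 hP) (leadingCoeff_ne_zero.2 hQ))
  rw [zsmul_eq_mul]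
  push_cast
  linear_combination top_coeff

end Wronskian

section RationalSeries

/-- A formal power series which is a quotient of two polynomials. The denominator is only
required to be nonzero; it may vanish at `0`. -/
def IsRationalSeries {R : Type*} [CommSemiring R] (F : R⟦X⟧) : Prop :=
  ∃ P Q : R[X], Q ≠ 0 ∧ (Q : R⟦X⟧) * F = P

lemma isRationalSeries_coe {R : Type*} [CommSemiring R] [Nontrivial R] (P : R[X]) :
    IsRationalSeries (P : R⟦X⟧) :=
  ⟨P, 1, one_ne_zero, by simp⟩

lemma IsRationalSeries.mem_zmultiples_of_linear_mul_derivative_eq {R : Type*} [CommRing R]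
    [IsDomain R] {F : R⟦X⟧} (hF : IsRationalSeries F) (hF0 : F ≠ 0) {w a c : R}
    (h : ((Polynomial.C w + Polynomial.C a * Polynomial.X : R[X]) : R⟦X⟧) * d⁄dX R F =
      (Polynomial.C c : R[X]) * F) :
    c ∈ AddSubgroup.zmultiples a := by
  obtain ⟨P, Q, hQ, hQF⟩ := hF
  have hP : P ≠ 0 := by
    rintro rfl
    simp [hQ, hF0] at hQF
  have hQF' : (Q : R⟦X⟧) * d⁄dX R F + F * derivative Q = derivative P := by
    simpa only [Derivation.leibniz, derivative_coe, smul_eq_mul] using congrArg (d⁄dX R) hQF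
  apply mem_zmultiples_of_linear_mul_wronskian_eq (w := w) hQ hP
  rw [← Polynomial.coe_inj, wronskian]
  simp only [Polynomial.coe_mul, Polynomial.coe_sub, ← hQF, ← hQF']
  linear_combination (Q : R⟦X⟧) ^ 2 * h

lemma isRationalSeries_iff_mem_fieldRange {K : Type*} [Field K] {F : K⟦X⟧} :
    IsRationalSeries F ↔
      algebraMap K⟦X⟧ K⸨X⸩ F ∈ (algebraMap K⟮X⟯ K⸨X⸩).fieldRange := by
  have coe_ne_zero {Q : K[X]} (hQ : Q ≠ 0) : algebraMap K⟦X⟧ K⸨X⸩ Q ≠ 0 := by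
    simpa [HahnSeries.ofPowerSeries_injective.eq_iff' (map_zero _)] using hQ
  have algebraMap_div (P Q : K[X]) : algebraMap K⟮X⟯ K⸨X⸩ (algebraMap _ _ P / algebraMap _ _ Q) =
      algebraMap K⟦X⟧ K⸨X⸩ P / algebraMap K⟦X⟧ K⸨X⸩ Q := RatFunc.algebraMap_apply_div P Q
  constructor
  · rintro ⟨P, Q, hQ, hQF⟩
    refine ⟨algebraMap K[X] K⟮X⟯ P / algebraMap K[X] K⟮X⟯ Q, ?_⟩
    rw [algebraMap_div, div_eq_iff (coe_ne_zero hQ), ← hQF, map_mul, mul_comm]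
  · rintro ⟨φ, hφ⟩
    refine ⟨φ.num, φ.denom, φ.denom_ne_zero, IsFractionRing.injective K⟦X⟧ K⸨X⸩ ?_⟩
    rw [← RatFunc.num_div_denom φ, algebraMap_div,
      div_eq_iff (coe_ne_zero φ.denom_ne_zero)] at hφ
    rw [map_mul, hφ, mul_comm]

end RationalSeries

section RationallyIntegrable

variable {k K : Type*} [Field k] [Field K] [Algebra k K] [CharZero K]

/-- A derivation is rationally integrable if its formal exponential takes values in the rational
power series. -/
def IsRationallyIntegrable (D : Derivation k K K) : Prop :=
  ∀ f, IsRationalSeries (formalExp D f)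

lemma isRationallyIntegrable_iff {D : Derivation k K K} :
    IsRationallyIntegrable D ↔ ∀ f : K, ∃ P Q : K[X], Q ≠ 0 ∧
      (Q : K⟦X⟧) * (PowerSeries.mk fun j => (j.factorial : K)⁻¹ * D^[j] f) = P := by
  refine forall_congr' fun f => ?_
  have formalExp_eq : formalExp D f = PowerSeries.mk fun j => (j.factorial : K)⁻¹ * D^[j] f := by
    ext j
    simp [coeff_formalExp, Rat.smul_def]
  rw [IsRationalSeries, formalExp_eq]

/-- The field of all `f` for which `exp(tD) f` is a rational power series. -/
noncomputable def rationalExpField (D : Derivation k K K) : IntermediateField k K :=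
  ((algebraMap K⟮X⟯ K⸨X⸩).fieldRange.comap
    ((algebraMap K⟦X⟧ K⸨X⸩).comp (formalExp D).toRingHom)).toIntermediateField fun c =>
    isRationalSeries_iff_mem_fieldRange.1 <| by
      simpa [formalExp_of_apply_eq_zero (D.map_algebraMap c)] using
        isRationalSeries_coe (Polynomial.C (algebraMap k K c))

lemma mem_rationalExpField {D : Derivation k K K} {f : K} :
    f ∈ rationalExpField D ↔ IsRationalSeries (formalExp D f) :=
  isRationalSeries_iff_mem_fieldRange.symm

lemma mem_rationalExpField_of_apply_apply_eq_zero {D : Derivation k K K} {f : K}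
    (hf : D (D f) = 0) : f ∈ rationalExpField D := by
  rw [mem_rationalExpField, formalExp_of_apply_apply_eq_zero hf]
  exact isRationalSeries_coe _

variable {M : Type*} [AddCommGroup M] {χ : Multiplicative M →* K} {p : M →+ k} {e : M}
  {D : Derivation k K K}

lemma mem_rationalExpField_of_mem_zmultiples
    (hD : ∀ m, D (χ (.ofAdd m)) = p m • χ (.ofAdd (m + e))) {m : M}
    (hm : p m ∈ AddSubgroup.zmultiples (p e)) : χ (.ofAdd m) ∈ rationalExpField D := by
  obtain ⟨r, hr⟩ := AddSubgroup.mem_zmultiples_iff.1 hm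
  have weight_mem : χ (.ofAdd (-e)) ∈ rationalExpField D :=
    mem_rationalExpField_of_apply_apply_eq_zero (by
      rw [hD, neg_add_cancel, ofAdd_zero, map_one, D.map_smul, D.map_one_eq_zero, smul_zero])
  have constant_mem : χ (.ofAdd (m - r • e)) ∈ rationalExpField D :=
    mem_rationalExpField_of_apply_apply_eq_zero (by
      rw [hD, map_sub, map_zsmul, hr, sub_self, zero_smul, map_zero])
  have factorization : χ (.ofAdd m) = χ (.ofAdd (m - r • e)) * χ (.ofAdd (-e)) ^ (-r) := by
    rw [← map_zpow, ← map_mul, ← ofAdd_zsmul, ← ofAdd_add, neg_smul_neg, sub_add_cancel]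
  exact factorization ▸ mul_mem constant_mem (zpow_mem weight_mem _)

lemma mem_zmultiples_of_mem_rationalExpField
    (hD : ∀ m, D (χ (.ofAdd m)) = p m • χ (.ofAdd (m + e))) {m : M}
    (hm : χ (.ofAdd m) ∈ rationalExpField D) : p m ∈ AddSubgroup.zmultiples (p e) := by
  have hDw : D (χ (.ofAdd (-e))) = algebraMap k K (-p e) := by
    rw [hD, neg_add_cancel, ofAdd_zero, map_one, map_neg, Algebra.algebraMap_eq_smul_one]
  have hwD : χ (.ofAdd (-e)) * D (χ (.ofAdd m)) = algebraMap k K (p m) * χ (.ofAdd m) := by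
    rw [hD, mul_smul_comm, ← map_mul, ← ofAdd_add, neg_add_cancel_comm_assoc, Algebra.smul_def]
  have hne : formalExp D (χ (.ofAdd m)) ≠ 0 :=
    (map_ne_zero_iff _ (formalExp_injective D)).2 ((Group.isUnit _).map χ).ne_zero
  have hode := linear_mul_derivative_formalExp (by rw [hDw, D.map_algebraMap])
    (D.map_algebraMap (p m)) hwD
  obtain ⟨r, hr⟩ := AddSubgroup.mem_zmultiples_iff.1
    ((mem_rationalExpField.1 hm).mem_zmultiples_of_linear_mul_derivative_eq hne hode)
  refine AddSubgroup.mem_zmultiples_iff.2 ⟨-r, (algebraMap k K).injective ?_⟩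
  rw [← hr, hDw, map_zsmul, map_neg, neg_smul, smul_neg]

theorem isRationallyIntegrable_iff_forall_mem_zmultiples
    (hχ : IntermediateField.adjoin k (Set.range χ) = ⊤)
    (hD : ∀ m, D (χ (.ofAdd m)) = p m • χ (.ofAdd (m + e))) :
    IsRationallyIntegrable D ↔ ∀ m, p m ∈ AddSubgroup.zmultiples (p e) := by
  refine ⟨fun h m => mem_zmultiples_of_mem_rationalExpField hD (mem_rationalExpField.2 (h _)),
    fun h f => mem_rationalExpField.1 ?_⟩
  have adjoin_le : IntermediateField.adjoin k (Set.range χ) ≤ rationalExpField D :=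
    IntermediateField.adjoin_le_iff.2 <| Set.range_subset_iff.2 fun m =>
      mem_rationalExpField_of_mem_zmultiples hD (h m.toAdd)
  exact adjoin_le (hχ ▸ IntermediateField.mem_top)

end RationallyIntegrable

lemma adjoin_range_monomials_eq_top (k M K : Type*) [Field k] [AddCommMonoid M] [Field K]
    [Algebra (AddMonoidAlgebra k M) K] [IsFractionRing (AddMonoidAlgebra k M) K]
    [Algebra k K] [IsScalarTower k (AddMonoidAlgebra k M) K] :
    IntermediateField.adjoin k (Set.range
      ((algebraMap (AddMonoidAlgebra k M) K).toMonoidHom.comp (AddMonoidAlgebra.of k M))) = ⊤ := by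
  set L := IntermediateField.adjoin k (Set.range
    ((algebraMap (AddMonoidAlgebra k M) K).toMonoidHom.comp (AddMonoidAlgebra.of k M)))
  have algebraMap_mem (g : AddMonoidAlgebra k M) : algebraMap _ K g ∈ L := by
    induction g using AddMonoidAlgebra.induction_on with
    | of m => exact IntermediateField.subset_adjoin k _ ⟨.ofAdd m, rfl⟩
    | add g h hg hh => rw [map_add]; exact add_mem hg hh
    | smul c g hg =>
      rw [Algebra.smul_def, map_mul, ← IsScalarTower.algebraMap_apply]
      exact mul_mem (L.algebraMap_mem c) hg
  refine top_unique fun f _ => ?_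
  obtain ⟨g, h, -, rfl⟩ := IsFractionRing.div_surjective (A := AddMonoidAlgebra k M) f
  exact div_mem (algebraMap_mem g) (algebraMap_mem h)

lemma isUnit_of_forall_dvd_of_primitive {M : Type*} [AddZeroClass M] {p : M →+ ℤ}
    (hprim : ∀ (d : ℤ) (q : M →+ ℤ), (∀ m, p m = d * q m) → IsUnit d)
    {d : ℤ} (hd : ∀ m, d ∣ p m) : IsUnit d :=
  hprim d
    (AddMonoidHom.mk' (fun m => p m / d) fun m₁ m₂ => by
      rw [map_add, Int.add_ediv_of_dvd_left (hd m₁)])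
    fun m => (Int.mul_ediv_cancel' (hd m)).symm

theorem isRationallyIntegrable_iff_forall_dvd {k M K : Type*} [Field k] [AddCommGroup M]
    [Field K] [CharZero K] [Algebra (AddMonoidAlgebra k M) K]
    [IsFractionRing (AddMonoidAlgebra k M) K] [Algebra k K]
    [IsScalarTower k (AddMonoidAlgebra k M) K] {p : M →+ ℤ} {e : M} {D : Derivation k K K}
    (hD : ∀ m, D (algebraMap (AddMonoidAlgebra k M) K (AddMonoidAlgebra.single m 1)) =
      algebraMap (AddMonoidAlgebra k M) K (p m • AddMonoidAlgebra.single (m + e) 1)) :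
    IsRationallyIntegrable D ↔ ∀ m, p e ∣ p m := by
  have : CharZero k := (algebraMap k K).charZero
  have hD_smul (m : M) : D (algebraMap (AddMonoidAlgebra k M) K (AddMonoidAlgebra.single m 1)) =
      (p m : k) • algebraMap (AddMonoidAlgebra k M) K (AddMonoidAlgebra.single (m + e) 1) := by
    rw [hD, map_zsmul, Int.cast_smul_eq_zsmul]
  have cast_mem_iff (m : M) : (p m : k) ∈ AddSubgroup.zmultiples (p e : k) ↔ p e ∣ p m := by
    simp only [AddSubgroup.mem_zmultiples_iff, zsmul_eq_mul, dvd_iff_exists_eq_mul_left,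
      eq_comm (b := (p m : k))]
    norm_cast
  exact (isRationallyIntegrable_iff_forall_mem_zmultiples (p := (Int.castAddHom k).comp p)
    (adjoin_range_monomials_eq_top k M K) hD_smul).trans (forall_congr' cast_mem_iff)

end RationalIntegrability

theorem toric_rationally_integrable_iff_general (k : Type*) [Field k] [CharZero k]
    (M : Type*) [AddCommGroup M] (p : M →+ ℤ) (e : M)
    (hprim : ∀ (d : ℤ) (q : M →+ ℤ), (∀ m, p m = d * q m) → IsUnit d)
    (K : Type*) [Field K] [Algebra (AddMonoidAlgebra k M) K]
    [IsFractionRing (AddMonoidAlgebra k M) K]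
    [Algebra k K] [IsScalarTower k (AddMonoidAlgebra k M) K]
    (D : Derivation k K K)
    (hD : ∀ m : M,
      D (algebraMap (AddMonoidAlgebra k M) K (AddMonoidAlgebra.single m (1 : k))) =
        algebraMap (AddMonoidAlgebra k M) K
          (p m • AddMonoidAlgebra.single (m + e) (1 : k))) :
    (∀ f : K, ∃ P Q : Polynomial K, Q ≠ 0 ∧
        (Q : PowerSeries K) *
          (PowerSeries.mk fun j => ((j.factorial : K)⁻¹) * ((⇑D)^[j] f)) = P)
      ↔ (p e = 1 ∨ p e = -1) := by
  have : CharZero K := charZero_of_injective_algebraMap (algebraMap k K).injective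
  rw [← RationalIntegrability.isRationallyIntegrable_iff,
    RationalIntegrability.isRationallyIntegrable_iff_forall_dvd hD, ← Int.isUnit_iff]
  exact ⟨RationalIntegrability.isUnit_of_forall_dvd_of_primitive hprim,
    fun h m => h.dvd⟩

/-- for M = ℤⁿ, a primitive nonzero linear form p : M → ℤ and e ∈ M,
the derivation ∂_{p,e} : χ^m ↦ p(m)χ^{m+e} of the Laurent polynomial ring k[M]
(char k = 0) induces a rationally integrable derivation of K = Frac(k[M]) — i.e.
each formal exponential exp(t∂)(f) = Σ ∂ⁿ(f)/n!·tⁿ ∈ K[[t]] is a quotient of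
polynomials in t — if and only if p(e) = 1 or p(e) = -1. -/
theorem toric_rationally_integrable_iff (k : Type*) [Field k] [CharZero k]
    (n : ℕ) (p : (Fin n → ℤ) →+ ℤ) (e : Fin n → ℤ)
    (hp0 : p ≠ 0)
    (hprim : ∀ (d : ℤ) (q : (Fin n → ℤ) →+ ℤ), (∀ m, p m = d * q m) → IsUnit d)
    (K : Type*) [Field K] [Algebra (AddMonoidAlgebra k (Fin n → ℤ)) K]
    [IsFractionRing (AddMonoidAlgebra k (Fin n → ℤ)) K]
    [Algebra k K] [IsScalarTower k (AddMonoidAlgebra k (Fin n → ℤ)) K]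
    (D : Derivation k K K)
    (hD : ∀ m : Fin n → ℤ,
      D (algebraMap (AddMonoidAlgebra k (Fin n → ℤ)) K
          (AddMonoidAlgebra.single m (1 : k))) =
        algebraMap (AddMonoidAlgebra k (Fin n → ℤ)) K
          (p m • AddMonoidAlgebra.single (m + e) (1 : k))) :
    (∀ f : K, ∃ P Q : Polynomial K, Q ≠ 0 ∧
        (Q : PowerSeries K) *
          (PowerSeries.mk fun j => ((j.factorial : K)⁻¹) * ((⇑D)^[j] f)) = P)
      ↔ (p e = 1 ∨ p e = -1) := by
  exact toric_rationally_integrable_iff_general k (Fin n → ℤ) p e hprim K D hD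
end

section
/- Let k be a field of characteristic zero and let ∂ ≠ 0 be a rationally integrable k-derivation of the field k(x,y). Then there exist x₀, y₀ ∈ k(x,y) with k(x,y) = k(x₀, y₀), ∂(x₀) = 0 and ∂(y₀) = 1. -/
/-!
If `exp(tD) f = P / Q` in lowest terms with `Q` monic, then `exp(tD) f` is killed by the derivation
`D - d/dt`, so `D Q - dQ/dt` is again a denominator; its degree is smaller than that of `Q`, hence
it vanishes, and then so does `D P - dP/dt`. Therefore `P(0)` and `Q(0)` are killed by powers of
`D`, and `f = P(0) / Q(0)`. If moreover `D f ≠ 0`, applying `D` to one of them repeatedly produces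
a slice, an element `s` with `D s = 1`, and Taylor expansion along `s` gives `K = (ker D)(s)`.

It remains to see that `L = ker D` is generated by one element. One of the generators, say `x`, is
transcendental over `L`, and Lüroth's theorem over `k(x)` gives `L(x) = k(x, z)`. Specializing `x`
to a general point `c` of `k` then shows that `L = k(z(c))`.
-/

namespace Rentschler

open Polynomial IntermediateField
open scoped PowerSeries

section Constants

variable {k K : Type*} [Field k] [Field K] [Algebra k K] (D : Derivation k K K)

/-- The field of constants of `D`, that is, its kernel. -/
def constants : IntermediateField k K where
  carrier := {a | D a = 0}
  mul_mem' ha hb := by simp_all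
  add_mem' ha hb := by simp_all
  algebraMap_mem' := D.map_algebraMap
  inv_mem' a ha := by simp_all [D.leibniz_inv]

lemma mem_constants {a : K} : a ∈ constants D ↔ D a = 0 := Iff.rfl

/-- `D`, regarded as a derivation over its own field of constants, so that statements about
`k`-derivations apply with `k` replaced by `constants D`. -/
def constantsDerivation : Derivation (constants D) K K :=
  Derivation.mk'
    { D.toLinearMap with
      map_smul' := fun c a => by
        have hc : D c = 0 := c.2
        simp [Algebra.smul_def, IntermediateField.algebraMap_apply, hc] }
    D.leibniz

@[simp]
lemma coe_constantsDerivation : ⇑(constantsDerivation D) = D := rfl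

lemma derivation_eq_zero_of_isSeparable {x : K} (hx : IsSeparable k x) : D x = 0 := by
  have h := D.map_aeval (minpoly k x) x
  rw [minpoly.aeval, map_zero, smul_eq_mul, eq_comm, mul_eq_zero] at h
  exact h.resolve_left (hx.aeval_derivative_ne_zero (minpoly.aeval k x))

lemma transcendental_constants [CharZero k] {x : K} (hx : D x ≠ 0) :
    Transcendental (constants D) x := fun halg =>
  hx (derivation_eq_zero_of_isSeparable (constantsDerivation D)
    (minpoly.irreducible halg.isIntegral).separable)

lemma exists_mem_apply_ne_zero {D : Derivation k K K} (hD : D ≠ 0) {S : Set K}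
    (hS : adjoin k S = ⊤) : ∃ f ∈ S, D f ≠ 0 := by
  by_contra! h
  have hle : adjoin k S ≤ constants D := adjoin_le_iff.mpr h
  exact hD (Derivation.ext fun a => hle (hS ▸ mem_top))

end Constants

section Slice

variable {k K : Type*} [Field k] [Field K] [Algebra k K] {D : Derivation k K K}

lemma iterate_smul {R A : Type*} [CommSemiring R] [CommSemiring A] [Algebra R A]
    (D : Derivation R A A) (c : R) (n : ℕ) (a : A) : D^[n] (c • a) = c • D^[n] a :=
  Function.Commute.iterate_left (g := (c • ·)) (D.map_smul c) n a

lemma exists_slice_of_iterate_eq_zero {n : ℕ} {p : K} (hp : D^[n] p = 0) (hDp : D p ≠ 0) :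
    ∃ s, D s = 1 := by
  induction n generalizing p with
  | zero => exact absurd (by simp_all) hDp
  | succ n ih =>
    by_cases hDDp : D (D p) = 0
    · exact ⟨p * (D p)⁻¹, by simp [D.leibniz_inv, hDDp, hDp]⟩
    · exact ih hp hDDp

lemma iterate_slice_pow {s : K} (hs : D s = 1) (n : ℕ) : D^[n] (s ^ n) = n.factorial := by
  induction n with
  | zero => simp
  | succ n ih =>
    rw [Function.iterate_succ_apply, D.leibniz_pow, Nat.add_sub_cancel, hs, smul_eq_mul, mul_one,
      iterate_map_nsmul, ih, nsmul_eq_mul, Nat.factorial_succ, Nat.cast_mul]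

lemma mem_adjoin_slice_of_iterate_eq_zero [CharZero k] {s : K} (hs : D s = 1) {n : ℕ} {p : K}
    (hp : D^[n] p = 0) : p ∈ (constants D)⟮s⟯ := by
  induction n generalizing p with
  | zero => rw [show p = 0 from hp]; exact zero_mem _
  | succ n ih =>
    have hfac : (n.factorial : constants D) ≠ 0 := Nat.cast_ne_zero.mpr n.factorial_ne_zero
    let c : constants D := ⟨D^[n] p, by rwa [mem_constants, ← Function.iterate_succ_apply' D]⟩
    have hmem : (c / n.factorial) • s ^ n ∈ (constants D)⟮s⟯ :=
      IntermediateField.smul_mem _ (pow_mem (mem_adjoin_simple_self _ s) n)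
    have hlead : D^[n] ((c / n.factorial) • s ^ n) = D^[n] p := by
      rw [← coe_constantsDerivation D, iterate_smul, coe_constantsDerivation,
        iterate_slice_pow hs, Algebra.smul_def, ← map_natCast (algebraMap (constants D) K),
        ← map_mul, div_mul_cancel₀ _ hfac]
      rfl
    rw [← sub_add_cancel p ((c / n.factorial) • s ^ n)]
    exact add_mem (ih (by rw [iterate_map_sub, hlead, sub_self])) hmem

end Slice

section Transport

variable {R A : Type*} [CommRing R] [CommRing A] [Algebra R A] (D : Derivation R A A)

/-- The transport operator `D - d/dt`, where `D` acts coefficientwise. If `A` is a `ℚ`-algebra, its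
kernel consists of the series `exp(tD) a`. -/
noncomputable def transport : Derivation R A⟦X⟧ A⟦X⟧ :=
  Derivation.mk'
    { toFun := fun F => PowerSeries.mk fun n => D (PowerSeries.coeff n F)
      map_add' := fun F G => by ext; simp
      map_smul' := fun c F => by ext; simp }
    (fun F G => by
      ext n
      simp [PowerSeries.coeff_mul, Finset.sum_add_distrib, mul_comm G, mul_comm (D _)]) -
  (PowerSeries.derivative A).restrictScalars R

lemma coeff_transport (F : A⟦X⟧) (n : ℕ) : PowerSeries.coeff n (transport D F) =
    D (PowerSeries.coeff n F) - PowerSeries.coeff (n + 1) F * (n + 1) := by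
  simp [transport, PowerSeries.coeff_derivative]

variable {D}

lemma iterate_coeff_zero_of_transport_eq_zero {F : A⟦X⟧} (hF : transport D F = 0) (n : ℕ) :
    D^[n] (PowerSeries.coeff 0 F) = n.factorial * PowerSeries.coeff n F := by
  induction n with
  | zero => simp
  | succ n ih =>
    have hn : D (PowerSeries.coeff n F) = PowerSeries.coeff (n + 1) F * (n + 1) := by
      rw [← sub_eq_zero, ← coeff_transport, hF, map_zero]
    rw [Function.iterate_succ_apply', ih, ← nsmul_eq_mul, map_nsmul, hn, nsmul_eq_mul,
      Nat.factorial_succ]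
    push_cast
    ring

lemma exists_iterate_coeff_zero_eq_zero {P : A[X]} (hP : transport D (P : A⟦X⟧) = 0) :
    ∃ n, D^[n] (P.coeff 0) = 0 := by
  refine ⟨P.natDegree + 1, ?_⟩
  rw [← Polynomial.coeff_coe, iterate_coeff_zero_of_transport_eq_zero hP, Polynomial.coeff_coe,
    coeff_eq_zero_of_natDegree_lt P.natDegree.lt_succ_self, mul_zero]

variable (D)

lemma exists_coe_eq_transport (P : A[X]) : ∃ Q : A[X], (Q : A⟦X⟧) = transport D P := by
  refine ⟨PowerSeries.trunc (P.natDegree + 1) (transport D P), ?_⟩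
  ext n
  rw [Polynomial.coeff_coe, PowerSeries.coeff_trunc]
  split_ifs with hn
  · rfl
  · simp [coeff_transport, coeff_eq_zero_of_natDegree_lt (show P.natDegree < n by omega),
      coeff_eq_zero_of_natDegree_lt (show P.natDegree < n + 1 by omega)]

variable {D}

lemma degree_lt_of_coe_eq_transport [Nontrivial A] {P Q : A[X]} (hP : P.Monic)
    (hQ : (Q : A⟦X⟧) = transport D P) : Q.degree < P.degree := by
  rw [degree_eq_natDegree hP.ne_zero, degree_lt_iff_coeff_zero]
  intro n hn
  rw [← Polynomial.coeff_coe, hQ, coeff_transport, Polynomial.coeff_coe, Polynomial.coeff_coe,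
    coeff_eq_zero_of_natDegree_lt (show P.natDegree < n + 1 by omega), zero_mul, sub_zero]
  rcases hn.eq_or_lt with rfl | hn
  · rw [hP.coeff_natDegree, D.map_one_eq_zero]
  · rw [coeff_eq_zero_of_natDegree_lt hn, map_zero]

end Transport

section Denominator

variable {A : Type*} [CommRing A]

/-- The ideal of denominators of `F`: the polynomials `Q` such that `Q * F` is a polynomial. Over a
field, its monic generator is the denominator of `F` in lowest terms. -/
def denominatorIdeal (F : A⟦X⟧) : Ideal A[X] where
  carrier := {Q | ∃ P : A[X], (Q : A⟦X⟧) * F = P}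
  zero_mem' := ⟨0, by simp⟩
  add_mem' := by
    rintro Q Q' ⟨P, hP⟩ ⟨P', hP'⟩
    exact ⟨P + P', by simp [add_mul, hP, hP']⟩
  smul_mem' := by
    rintro B Q ⟨P, hP⟩
    exact ⟨B * P, by simp [mul_assoc, hP]⟩

lemma coeff_zero_ne_zero_of_denominatorIdeal_eq_span [IsDomain A] {F : A⟦X⟧} {Q : A[X]}
    (hQ : Q ≠ 0) (hspan : denominatorIdeal F = Ideal.span {Q}) : Q.coeff 0 ≠ 0 := by
  intro hQ0
  obtain ⟨P, hP⟩ : Q ∈ denominatorIdeal F := hspan.symm ▸ Ideal.mem_span_singleton_self Q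
  obtain ⟨Q', rfl⟩ := X_dvd_iff.mpr hQ0
  have hP0 : P.coeff 0 = 0 := by
    simpa using (congrArg (PowerSeries.coeff 0) hP).symm
  obtain ⟨P', rfl⟩ := X_dvd_iff.mpr hP0
  have hQ' : Q' ∈ denominatorIdeal F := by
    refine ⟨P', mul_left_cancel₀ PowerSeries.X_ne_zero ?_⟩
    simpa [mul_assoc] using hP
  rw [hspan, Ideal.mem_span_singleton] at hQ'
  have hQ'0 : Q' ≠ 0 := right_ne_zero_of_mul hQ
  have hdeg := natDegree_le_of_dvd hQ' hQ'0
  rw [natDegree_X_mul hQ'0] at hdeg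
  omega

variable {R : Type*} [CommRing R] [Algebra R A] {D : Derivation R A A} {F : A⟦X⟧}

lemma transport_mul_eq {P Q : A[X]} (hF : transport D F = 0) (hP : (Q : A⟦X⟧) * F = P) :
    transport D (Q : A⟦X⟧) * F = transport D P := by
  rw [← hP, Derivation.leibniz, hF, smul_zero, zero_add, smul_eq_mul, mul_comm]

lemma transport_eq_zero_of_denominatorIdeal_eq_span [Nontrivial A] {Q : A[X]} (hQ : Q.Monic)
    (hspan : denominatorIdeal F = Ideal.span {Q}) (hF : transport D F = 0) :
    transport D (Q : A⟦X⟧) = 0 := by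
  obtain ⟨P, hP⟩ : Q ∈ denominatorIdeal F := hspan.symm ▸ Ideal.mem_span_singleton_self Q
  obtain ⟨P', hP'⟩ := exists_coe_eq_transport D P
  obtain ⟨Q', hQ'⟩ := exists_coe_eq_transport D Q
  have hmem : Q' ∈ denominatorIdeal F := ⟨P', by rw [hP', hQ', transport_mul_eq hF hP]⟩
  rw [hspan, Ideal.mem_span_singleton] at hmem
  have hzero : Q' = 0 := by
    by_contra hne
    exact hQ.not_dvd_of_degree_lt hne (degree_lt_of_coe_eq_transport hQ hQ') hmem
  rw [← hQ', hzero, Polynomial.coe_zero]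

end Denominator

section Exponential

variable {k K : Type*} [Field k] [Field K] [Algebra k K]

/-- `F` is the expansion at `0` of a rational function. The denominator `Q` may vanish at `0`, since
a common factor `X` of `P` and `Q` is allowed. -/
def IsRational (F : K⟦X⟧) : Prop :=
  ∃ P Q : K[X], Q ≠ 0 ∧ (Q : K⟦X⟧) * F = P

variable (D : Derivation k K K)

/-- The power series `exp(tD) f`, in the variable `t`. The coefficients are only meaningful in
characteristic zero, because of the inverse factorials. -/
noncomputable def expSeries (f : K) : K⟦X⟧ :=
  PowerSeries.mk fun j => ((j.factorial : K)⁻¹) * D^[j] f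

lemma transport_expSeries [CharZero K] (f : K) : transport D (expSeries D f) = 0 := by
  ext n
  have hn : (n.factorial : K) ≠ 0 := Nat.cast_ne_zero.mpr n.factorial_ne_zero
  have hn' : (n + 1 : K) ≠ 0 := Nat.cast_add_one_ne_zero n
  simp only [coeff_transport, expSeries, PowerSeries.coeff_mk, D.leibniz, D.leibniz_inv,
    D.map_natCast, Function.iterate_succ_apply', Nat.factorial_succ, Nat.cast_mul, Nat.cast_succ,
    smul_eq_mul, map_zero]
  field_simp
  ring

variable {D}

lemma exists_eq_div_of_isRational_expSeries [CharZero K] {f : K}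
    (hf : IsRational (expSeries D f)) :
    ∃ p q : K, f = p / q ∧ (∃ n, D^[n] p = 0) ∧ ∃ n, D^[n] q = 0 := by
  obtain ⟨P₀, Q₀, hQ₀, hP₀⟩ := hf
  have hne : denominatorIdeal (expSeries D f) ≠ ⊥ :=
    (Submodule.ne_bot_iff _).mpr ⟨Q₀, ⟨P₀, hP₀⟩, hQ₀⟩
  obtain ⟨Q, hQ, hspan⟩ := exists_monic_span _ hne
  obtain ⟨P, hP⟩ : Q ∈ denominatorIdeal (expSeries D f) :=
    hspan.symm ▸ Ideal.mem_span_singleton_self Q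
  have hQ0 := coeff_zero_ne_zero_of_denominatorIdeal_eq_span hQ.ne_zero hspan
  have hDQ := transport_eq_zero_of_denominatorIdeal_eq_span hQ hspan (transport_expSeries D f)
  have hDP : transport D (P : K⟦X⟧) = 0 := by
    rw [← transport_mul_eq (transport_expSeries D f) hP, hDQ, zero_mul]
  have hvalue : Q.coeff 0 * f = P.coeff 0 := by
    simpa [expSeries] using congrArg (PowerSeries.coeff 0) hP
  exact ⟨P.coeff 0, Q.coeff 0, eq_div_of_mul_eq hQ0 (by rw [mul_comm, hvalue]),
    exists_iterate_coeff_zero_eq_zero hDP, exists_iterate_coeff_zero_eq_zero hDQ⟩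

lemma exists_slice_of_isRational_expSeries [CharZero K] {f : K}
    (hf : IsRational (expSeries D f)) (hDf : D f ≠ 0) : ∃ s, D s = 1 := by
  obtain ⟨p, q, rfl, ⟨m, hp⟩, n, hq⟩ := exists_eq_div_of_isRational_expSeries hf
  by_cases hDp : D p = 0
  · by_cases hDq : D q = 0
    · exact absurd ((constants D).div_mem hDp hDq) hDf
    · exact exists_slice_of_iterate_eq_zero hq hDq
  · exact exists_slice_of_iterate_eq_zero hp hDp

lemma adjoin_constants_slice_eq_top [CharZero k] {S : Set K} (hS : adjoin k S = ⊤)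
    (hrat : ∀ f ∈ S, IsRational (expSeries D f)) {s : K} (hs : D s = 1) :
    (constants D)⟮s⟯ = ⊤ := by
  have : CharZero K := charZero_of_injective_algebraMap (algebraMap k K).injective
  have hle : adjoin k S ≤ (constants D)⟮s⟯.restrictScalars k := by
    refine adjoin_le_iff.mpr fun f hf => ?_
    obtain ⟨p, q, rfl, ⟨m, hp⟩, n, hq⟩ := exists_eq_div_of_isRational_expSeries (hrat f hf)
    exact div_mem (mem_adjoin_slice_of_iterate_eq_zero hs hp)
      (mem_adjoin_slice_of_iterate_eq_zero hs hq)
  exact eq_top_iff.mpr fun f _ => hle (hS ▸ mem_top)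

end Exponential

section SimpleExtension

lemma exists_eq_adjoin_simple_of_adjoin_simple_eq_top {F E : Type*} [Field F] [Field E]
    [Algebra F E] {y : E} (hy : F⟮y⟯ = ⊤) (M : IntermediateField F E) : ∃ z, M = F⟮z⟯ := by
  by_cases halg : IsAlgebraic F y
  · have : Algebra.IsAlgebraic F (⊤ : IntermediateField F E) :=
      hy ▸ isAlgebraic_adjoin_simple halg.isIntegral
    have : Algebra.IsAlgebraic F E := topEquiv.isAlgebraic
    have := Field.finite_intermediateField_of_exists_primitive_element F E ⟨y, hy⟩
    exact (Field.exists_primitive_element_of_finite_intermediateField F E M).imp fun _ => Eq.symm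
  · let e : RatFunc F ≃ₐ[F] E :=
      (RatFunc.algEquivOfTranscendental y halg).trans ((equivOfEq hy).trans topEquiv)
    obtain ⟨r, hr⟩ : ∃ r, M.map (e.symm : E →ₐ[F] RatFunc F) = F⟮r⟯ :=
      ⟨_, RatFunc.Luroth.eq_adjoin_generator⟩
    refine ⟨e r, ?_⟩
    calc M = (M.map (e.symm : E →ₐ[F] RatFunc F)).map (e : RatFunc F →ₐ[F] E) := by
          rw [IntermediateField.map_map, AlgEquiv.comp_symm, IntermediateField.map_id]
      _ = F⟮e r⟯ := by rw [hr, adjoin_map, Set.image_singleton, AlgEquiv.toAlgHom_apply]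

end SimpleExtension

section Specialization

variable {k F : Type*} [Field k] [Field F] [Algebra k F]

/-- The value of `r` at the point `c` of the ground field; it is `0` when `c` is a pole. -/
noncomputable def evalAt (c : k) (r : RatFunc F) : F :=
  r.eval (RingHom.id F) (algebraMap k F c)

variable (k)

lemma eventually_eval_ne_zero {p : F[X]} (hp : p ≠ 0) :
    ∀ᶠ c : k in Filter.cofinite, p.eval (algebraMap k F c) ≠ 0 := by
  have hfin := (p.finite_setOfPred_isRoot hp).preimage (algebraMap k F).injective.injOn
  simpa [Filter.eventually_cofinite, IsRoot] using hfin

lemma eventually_evalAt_add (r s : RatFunc F) :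
    ∀ᶠ c : k in Filter.cofinite, evalAt c (r + s) = evalAt c r + evalAt c s := by
  filter_upwards [eventually_eval_ne_zero k r.denom_ne_zero,
    eventually_eval_ne_zero k s.denom_ne_zero] with c hr hs
  exact RatFunc.eval_add _ _ hr hs

lemma eventually_evalAt_mul (r s : RatFunc F) :
    ∀ᶠ c : k in Filter.cofinite, evalAt c (r * s) = evalAt c r * evalAt c s := by
  filter_upwards [eventually_eval_ne_zero k r.denom_ne_zero,
    eventually_eval_ne_zero k s.denom_ne_zero] with c hr hs
  exact RatFunc.eval_mul _ _ hr hs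

lemma eventually_evalAt_inv (r : RatFunc F) :
    ∀ᶠ c : k in Filter.cofinite, evalAt c r⁻¹ = (evalAt c r)⁻¹ := by
  rcases eq_or_ne r 0 with rfl | hr
  · simp [evalAt]
  · filter_upwards [eventually_evalAt_mul k r r⁻¹] with c hc
    rw [mul_inv_cancel₀ hr] at hc
    exact eq_inv_of_mul_eq_one_right (by rw [← hc]; simp [evalAt])

lemma eventually_evalAt_mem_adjoin {S : Set (RatFunc F)} {r : RatFunc F} (hr : r ∈ adjoin k S) :
    ∀ᶠ c : k in Filter.cofinite, evalAt c r ∈ adjoin k (evalAt c '' S) := by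
  induction hr using adjoin_induction with
  | mem r hr => exact .of_forall fun c => subset_adjoin _ _ ⟨r, hr, rfl⟩
  | algebraMap a =>
    refine .of_forall fun c => ?_
    convert (adjoin k (evalAt c '' S)).algebraMap_mem a
    rw [IsScalarTower.algebraMap_apply k F (RatFunc F), RatFunc.algebraMap_eq_C]
    simp [evalAt]
  | add r s _ _ hr hs =>
    filter_upwards [hr, hs, eventually_evalAt_add k r s] with c hr hs h
    exact h ▸ add_mem hr hs
  | mul r s _ _ hr hs =>
    filter_upwards [hr, hs, eventually_evalAt_mul k r s] with c hr hs h
    exact h ▸ mul_mem hr hs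
  | inv r _ hr =>
    filter_upwards [hr, eventually_evalAt_inv k r] with c hr h
    exact h ▸ inv_mem hr

lemma mem_bot_of_C_mem_adjoin_X [Infinite k] {a : F}
    (ha : RatFunc.C a ∈ k⟮(RatFunc.X : RatFunc F)⟯) : a ∈ (⊥ : IntermediateField k F) := by
  obtain ⟨c, hc⟩ := (eventually_evalAt_mem_adjoin k ha).exists
  have hX : adjoin k (evalAt c '' {(RatFunc.X : RatFunc F)}) = ⊥ := by
    rw [Set.image_singleton, adjoin_simple_eq_bot_iff, evalAt, RatFunc.eval_X]
    exact IntermediateField.algebraMap_mem _ c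
  rw [hX] at hc
  simpa [evalAt] using hc

lemma eventually_mem_adjoin_evalAt {z : RatFunc F} {a : F}
    (ha : RatFunc.C a ∈ k⟮RatFunc.X, z⟯) :
    ∀ᶠ c : k in Filter.cofinite, a ∈ k⟮evalAt c z⟯ := by
  filter_upwards [eventually_evalAt_mem_adjoin k ha] with c hc
  have hle : adjoin k (evalAt c '' {RatFunc.X, z}) ≤ k⟮evalAt c z⟯ := by
    simp [adjoin_le_iff, Set.insert_subset_iff, evalAt, mem_adjoin_simple_self]
  simpa [evalAt] using hle hc

variable {k}

lemma algebraMap_mem_adjoin_X {L : IntermediateField k F} {p : F[X]} (hp : ∀ i, p.coeff i ∈ L) :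
    algebraMap F[X] (RatFunc F) p ∈ L⟮(RatFunc.X : RatFunc F)⟯ := by
  rw [p.as_sum_support_C_mul_X_pow, map_sum]
  refine sum_mem fun i _ => ?_
  rw [map_mul, map_pow, RatFunc.algebraMap_C, RatFunc.algebraMap_X]
  exact mul_mem (IntermediateField.algebraMap_mem L⟮(RatFunc.X : RatFunc F)⟯ ⟨_, hp i⟩)
    (pow_mem (mem_adjoin_simple_self _ _) i)

theorem exists_adjoin_simple_eq_top_of_adjoin_X_eq_top [Infinite k] {z : RatFunc F}
    (hz : k⟮RatFunc.X, z⟯ = ⊤) : ∃ ζ : F, k⟮ζ⟯ = ⊤ := by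
  have hcoeff (p : F[X]) : ∀ᶠ c : k in Filter.cofinite, ∀ i, p.coeff i ∈ k⟮evalAt c z⟯ := by
    have hsupp := (Filter.eventually_all_finset p.support).mpr fun i _ =>
      eventually_mem_adjoin_evalAt k (hz ▸ mem_top : RatFunc.C (p.coeff i) ∈ k⟮RatFunc.X, z⟯)
    filter_upwards [hsupp] with c hc i
    by_cases hi : i ∈ p.support
    · exact hc i hi
    · rw [notMem_support_iff.mp hi]
      exact zero_mem _
  obtain ⟨c, hnum, hdenom⟩ := ((hcoeff z.num).and (hcoeff z.denom)).exists
  set L := k⟮evalAt c z⟯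
  have : Infinite L := .of_injective _ (algebraMap k L).injective
  have hzL : z ∈ L⟮(RatFunc.X : RatFunc F)⟯ := by
    rw [← z.num_div_denom]
    exact div_mem (algebraMap_mem_adjoin_X hnum) (algebraMap_mem_adjoin_X hdenom)
  have htop : k⟮RatFunc.X, z⟯ ≤ L⟮(RatFunc.X : RatFunc F)⟯.restrictScalars k := by
    simp [adjoin_le_iff, Set.insert_subset_iff, mem_adjoin_simple_self, hzL]
  refine ⟨evalAt c z, eq_top_iff.mpr fun a _ => ?_⟩
  have ha : RatFunc.C a ∈ L⟮(RatFunc.X : RatFunc F)⟯ := htop (hz ▸ mem_top)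
  obtain ⟨b, rfl⟩ := mem_bot.mp (mem_bot_of_C_mem_adjoin_X L ha)
  exact b.2

end Specialization

section Plane

variable {k K : Type*} [Field k] [Field K] [Algebra k K]

lemma exists_adjoin_X_eq_top {L : IntermediateField k K} {x z : K} (hx : Transcendental L x)
    (h : L⟮x⟯.restrictScalars k = k⟮x, z⟯) : ∃ z₀ : RatFunc L, k⟮RatFunc.X, z₀⟯ = ⊤ := by
  let e := RatFunc.algEquivOfTranscendental x hx
  let φ : RatFunc L →ₐ[k] K := (L⟮x⟯.val.comp e.toAlgHom).restrictScalars k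
  have hzmem : z ∈ L⟮x⟯.restrictScalars k := h ▸ subset_adjoin k _ (by simp)
  obtain ⟨z₀, hz₀⟩ := e.surjective ⟨z, hzmem⟩
  refine ⟨z₀, map_injective φ ?_⟩
  have hφX : φ RatFunc.X = x := RatFunc.algEquivOfTranscendental_X x hx
  have hφz : φ z₀ = z := congrArg Subtype.val hz₀
  rw [adjoin_map, Set.image_pair, hφX, hφz, ← h, ← AlgHom.fieldRange_eq_map]
  ext a
  exact ⟨fun ha => (e.surjective ⟨a, ha⟩).imp fun b hb => congrArg Subtype.val hb,
    by rintro ⟨b, rfl⟩; exact (e b).2⟩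

theorem exists_eq_adjoin_simple_of_transcendental [Infinite k] {x y : K} (hxy : k⟮x, y⟯ = ⊤)
    {L : IntermediateField k K} (hx : Transcendental L x) : ∃ x₀ : K, L = k⟮x₀⟯ := by
  have hy : k⟮x⟯⟮y⟯ = ⊤ := by
    apply restrictScalars_injective k
    rw [adjoin_simple_adjoin_simple, hxy, restrictScalars_top]
  obtain ⟨z, hz⟩ := exists_eq_adjoin_simple_of_adjoin_simple_eq_top hy (adjoin k⟮x⟯ (L : Set K))
  have hLx : L⟮x⟯.restrictScalars k = k⟮x, z⟯ := by
    rw [restrictScalars_adjoin, Set.union_comm, ← adjoin_adjoin_left, hz,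
      adjoin_simple_adjoin_simple]
  obtain ⟨z₀, hz₀⟩ := exists_adjoin_X_eq_top hx hLx
  obtain ⟨ζ, hζ⟩ := exists_adjoin_simple_eq_top_of_adjoin_X_eq_top hz₀
  exact ⟨ζ, by rw [← lift_adjoin_simple, hζ, lift_top]⟩

end Plane

end Rentschler

open IntermediateField Rentschler in
theorem rentschler_rational_general {k K : Type*} [Field k] [CharZero k] [Field K] [Algebra k K]
    {x y : K} (hgen : k⟮x, y⟯ = ⊤) {D : Derivation k K K} (hD : D ≠ 0)
    (hx : IsRational (expSeries D x)) (hy : IsRational (expSeries D y)) :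
    ∃ x₀ y₀ : K, k⟮x₀, y₀⟯ = ⊤ ∧ D x₀ = 0 ∧ D y₀ = 1 := by
  have : CharZero K := charZero_of_injective_algebraMap (algebraMap k K).injective
  have hrat : ∀ f ∈ ({x, y} : Set K), IsRational (expSeries D f) := by simp [hx, hy]
  obtain ⟨f, hf, hDf⟩ := exists_mem_apply_ne_zero hD hgen
  obtain ⟨s, hs⟩ := exists_slice_of_isRational_expSeries (hrat f hf) hDf
  obtain ⟨x₀, hx₀⟩ : ∃ x₀, constants D = k⟮x₀⟯ := by
    have htr := transcendental_constants D hDf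
    rcases hf with rfl | rfl
    · exact exists_eq_adjoin_simple_of_transcendental hgen htr
    · exact exists_eq_adjoin_simple_of_transcendental (Set.pair_comm x f ▸ hgen) htr
  have hDx₀ : x₀ ∈ constants D := hx₀ ▸ mem_adjoin_simple_self k x₀
  refine ⟨x₀, s, ?_, hDx₀, hs⟩
  rw [← adjoin_simple_adjoin_simple, ← hx₀, adjoin_constants_slice_eq_top hgen hrat hs,
    restrictScalars_top]

/-- let K = k(x,y) be a rational function field in two variables over
a field k of characteristic zero (an extension generated by two algebraically
independent elements x, y).  Every nonzero rationally integrable k-derivation ∂ of K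
becomes, after a birational change of coordinates, the derivation r(x₀)·∂/∂y₀:
there exist x₀, y₀ ∈ K with K = k(x₀, y₀), ∂(x₀) = 0 and ∂(y₀) = 1. -/
theorem rentschler_rational (k : Type*) [Field k] [CharZero k]
    (K : Type*) [Field K] [Algebra k K]
    (x y : K) (hind : AlgebraicIndependent k ![x, y])
    (hgen : IntermediateField.adjoin k {x, y} = ⊤)
    (D : Derivation k K K) (hD0 : D ≠ 0)
    (hratint : ∀ f : K, ∃ P Q : Polynomial K, Q ≠ 0 ∧
      (Q : PowerSeries K) *
        (PowerSeries.mk fun j => ((j.factorial : K)⁻¹) * ((⇑D)^[j] f)) = P) :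
    ∃ x₀ y₀ : K, IntermediateField.adjoin k {x₀, y₀} = ⊤ ∧
      D x₀ = 0 ∧ D y₀ = 1 :=
  rentschler_rational_general hgen hD0 (hratint x) (hratint y)
end
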